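/- Let n ≥ 1 and suppose (A,b) satisfies Setting B with constant δ ∈ (n/(n+π²),1]. Define γ := tr A/(|A|² + |b|²), Ã := γA, b̃ := γb, and κ := (δ − n/(n+π²))·(n+π²)/π². Then κ ∈ (0,1], and for every continuously differentiable ℤⁿ-periodic vector field w : ℝⁿ → ℝⁿ with ∫_Y w = 0 there holds ∫_Y |Ã:Dw + b̃·w − ∇·w|² ≤ (1−κ) ∫_Y |Dw|², where Dw is the Jacobian matrix of w, ∇·w = tr(Dw) its divergence, and |Dw| the Frobenius norm. -/

import Mathlib

open MeasureTheory

noncomputable section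

/-- The unit cell `Y = (0,1)^n`. -/
def unitCell (n : ℕ) : Set (Fin n → ℝ) := Set.univ.pi fun _ => Set.Ioo (0 : ℝ) 1

/-- Frobenius norm squared of a matrix. -/
def frobSq {n : ℕ} (M : Matrix (Fin n) (Fin n) ℝ) : ℝ := ∑ i, ∑ j, (M i j) ^ 2

/-- Frobenius inner product of two matrices. -/
def frobInner {n : ℕ} (M N : Matrix (Fin n) (Fin n) ℝ) : ℝ := ∑ i, ∑ j, M i j * N i j

/-- Euclidean norm squared of a vector. -/
def euclSq {n : ℕ} (v : Fin n → ℝ) : ℝ := ∑ i, (v i) ^ 2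

/-- Euclidean dot product. -/
def dotc {n : ℕ} (v w : Fin n → ℝ) : ℝ := ∑ i, v i * w i

/-- `ℤⁿ`-periodicity of a function on `ℝⁿ`. -/
def IsPeriodic {n : ℕ} {α : Type*} (f : (Fin n → ℝ) → α) : Prop :=
  ∀ (x : Fin n → ℝ) (k : Fin n → ℤ), f (x + fun i => (k i : ℝ)) = f x

/-- Partial derivative in direction `i`. -/
def pd {n : ℕ} (f : (Fin n → ℝ) → ℝ) (i : Fin n) (x : Fin n → ℝ) : ℝ :=
  fderiv ℝ f x (Pi.single i 1)

/-- Gradient. -/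
def grad {n : ℕ} (f : (Fin n → ℝ) → ℝ) (x : Fin n → ℝ) : Fin n → ℝ := fun i => pd f i x

/-- Hessian matrix. -/
def hess {n : ℕ} (f : (Fin n → ℝ) → ℝ) (x : Fin n → ℝ) : Matrix (Fin n) (Fin n) ℝ :=
  Matrix.of fun i j => pd (pd f j) i x

/-- Laplacian. -/
def lap {n : ℕ} (f : (Fin n → ℝ) → ℝ) (x : Fin n → ℝ) : ℝ := ∑ i, pd (pd f i) i x

/-- Jacobian matrix of a vector field: `(jac w x) i j = ∂_j w_i (x)`. -/
def jac {n : ℕ} (w : (Fin n → ℝ) → Fin n → ℝ) (x : Fin n → ℝ) : Matrix (Fin n) (Fin n) ℝ :=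
  Matrix.of fun i j => pd (fun y => w y i) j x

/-- Divergence of a vector field. -/
def divg {n : ℕ} (w : (Fin n → ℝ) → Fin n → ℝ) (x : Fin n → ℝ) : ℝ :=
  ∑ i, pd (fun y => w y i) i x

/-- Setting B: symmetric-valued, measurable, `ℤⁿ`-periodic, essentially bounded coefficients,
uniform ellipticity, and the Cordes-type condition with constant `δ ∈ (n/(n+π²), 1]`. -/
structure SettingB {n : ℕ} (A : (Fin n → ℝ) → Matrix (Fin n) (Fin n) ℝ)
    (b : (Fin n → ℝ) → Fin n → ℝ) (lam Lam δ : ℝ) : Prop where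
  symm : ∀ x, (A x).IsSymm
  measA : ∀ i j, Measurable fun x => A x i j
  measb : ∀ i, Measurable fun x => b x i
  perA : IsPeriodic A
  perb : IsPeriodic b
  bddA : ∃ C : ℝ, ∀ᵐ x ∂(volume : Measure (Fin n → ℝ)), frobSq (A x) ≤ C
  bddb : ∃ C : ℝ, ∀ᵐ x ∂(volume : Measure (Fin n → ℝ)), euclSq (b x) ≤ C
  lam_pos : 0 < lam
  lam_le_Lam : lam ≤ Lam
  ellip : ∀ᵐ x ∂(volume : Measure (Fin n → ℝ)), ∀ ξ : Fin n → ℝ,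
    lam * euclSq ξ ≤ dotc ξ (Matrix.mulVec (A x) ξ) ∧
      dotc ξ (Matrix.mulVec (A x) ξ) ≤ Lam * euclSq ξ
  delta_mem : δ ∈ Set.Ioc ((n : ℝ) / ((n : ℝ) + Real.pi ^ 2)) 1
  cordes : ∀ᵐ x ∂(volume : Measure (Fin n → ℝ)),
    (frobSq (A x) + euclSq (b x)) / (Matrix.trace (A x)) ^ 2 ≤ 1 / ((n : ℝ) - 1 + δ)

/-- The renormalization function `γ = tr A / (|A|² + |b|²)`. -/
def gam {n : ℕ} (A : (Fin n → ℝ) → Matrix (Fin n) (Fin n) ℝ)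
    (b : (Fin n → ℝ) → Fin n → ℝ) (x : Fin n → ℝ) : ℝ :=
  Matrix.trace (A x) / (frobSq (A x) + euclSq (b x))

/-- The constant `κ = (δ − n/(n+π²))·(n+π²)/π²`. -/
def kappa (n : ℕ) (δ : ℝ) : ℝ :=
  (δ - (n : ℝ) / ((n : ℝ) + Real.pi ^ 2)) * (((n : ℝ) + Real.pi ^ 2) / Real.pi ^ 2)

/-- The invariant measure: measurable, `ℤⁿ`-periodic, square-integrable over `Y`,
with unit mass over `Y`, solving the stationary FPK equation in the very weak sense. -/
def IsInvariantMeasure {n : ℕ} (A : (Fin n → ℝ) → Matrix (Fin n) (Fin n) ℝ)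
    (b : (Fin n → ℝ) → Fin n → ℝ) (r : (Fin n → ℝ) → ℝ) : Prop :=
  Measurable r ∧ IsPeriodic r ∧
    IntegrableOn (fun x => (r x) ^ 2) (unitCell n) ∧
    (∫ x in unitCell n, r x) = 1 ∧
    ∀ φ : (Fin n → ℝ) → ℝ, ContDiff ℝ 2 φ → IsPeriodic φ →
      (∫ x in unitCell n,
        r x * (frobInner (A x) (hess φ x) + dotc (b x) (grad φ x))) = 0

/-- The bilinear form `B₂`. -/
def B2 {n : ℕ} (A : (Fin n → ℝ) → Matrix (Fin n) (Fin n) ℝ)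
    (b : (Fin n → ℝ) → Fin n → ℝ) (v w : (Fin n → ℝ) → Fin n → ℝ) : ℝ :=
  (∫ x in unitCell n,
    divg v x * (frobInner (gam A b x • A x) (jac w x) + dotc (gam A b x • b x) (w x)))
  + (1 / 2) * ∫ x in unitCell n,
      frobInner (jac v x - (jac v x).transpose) (jac w x - (jac w x).transpose)

theorem unitCell_subset_Icc (n : ℕ) : unitCell n ⊆ Set.Icc 0 1 :=
  fun _ hx => ⟨fun i => (hx i trivial).1.le, fun i => (hx i trivial).2.le⟩

theorem restrict_unitCell (n : ℕ) :
    (volume : Measure (Fin n → ℝ)).restrict (unitCell n)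
      = Measure.pi fun _ => (volume : Measure ℝ).restrict (Set.Ioo 0 1) := by
  rw [unitCell, volume_pi, Measure.restrict_pi_pi]

instance isProbabilityMeasure_restrict_Ioo :
    IsProbabilityMeasure ((volume : Measure ℝ).restrict (Set.Ioo 0 1)) :=
  ⟨by simp⟩

instance isProbabilityMeasure_restrict_unitCell (n : ℕ) :
    IsProbabilityMeasure ((volume : Measure (Fin n → ℝ)).restrict (unitCell n)) := by
  rw [restrict_unitCell]; infer_instance

theorem Continuous.integrableOn_unitCell {n : ℕ} {g : (Fin n → ℝ) → ℝ} (hg : Continuous g) :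
    Integrable g (volume.restrict (unitCell n)) :=
  (hg.continuousOn.integrableOn_compact isCompact_Icc).mono_set (unitCell_subset_Icc n)

theorem Continuous.integrableOn_Ioo_zero_one {g : ℝ → ℝ} (hg : Continuous g) :
    Integrable g (volume.restrict (Set.Ioo 0 1)) :=
  (hg.continuousOn.integrableOn_compact isCompact_Icc).mono_set Set.Ioo_subset_Icc_self

theorem Continuous.integrable_unitCell_prod {n : ℕ} {g : (Fin n → ℝ) × (Fin n → ℝ) → ℝ}
    (hg : Continuous g) :
    Integrable g ((volume.restrict (unitCell n)).prod (volume.restrict (unitCell n))) := by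
  rw [Measure.prod_restrict]
  exact (hg.continuousOn.integrableOn_compact (isCompact_Icc.prod isCompact_Icc)).mono_set
    (Set.prod_mono (unitCell_subset_Icc n) (unitCell_subset_Icc n))

theorem Continuous.integrable_unitCell_prod_Ioo {n : ℕ} {g : (Fin n → ℝ) × ℝ → ℝ}
    (hg : Continuous g) :
    Integrable g ((volume.restrict (unitCell n)).prod (volume.restrict (Set.Ioo 0 1))) := by
  rw [Measure.prod_restrict]
  exact (hg.continuousOn.integrableOn_compact (isCompact_Icc.prod isCompact_Icc)).mono_set
    (Set.prod_mono (unitCell_subset_Icc n) Set.Ioo_subset_Icc_self)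

open scoped Pointwise in
/-- Integrals of periodic functions over the unit cell are translation invariant. -/
theorem IsPeriodic.setIntegral_comp_add {n : ℕ} {g : (Fin n → ℝ) → ℝ} (hg : IsPeriodic g)
    (a : Fin n → ℝ) : ∫ x in unitCell n, g (x + a) = ∫ x in unitCell n, g x := by
  have hae : unitCell n =ᵐ[volume] ZSpan.fundamentalDomain (Pi.basisFun ℝ (Fin n)) := by
    rw [ZSpan.fundamentalDomain_pi_basisFun]
    exact Measure.univ_pi_Ioo_ae_eq_Icc.trans Measure.univ_pi_Ico_ae_eq_Icc.symm
  have hD := ZSpan.isAddFundamentalDomain' (Pi.basisFun ℝ (Fin n)) volume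
  rw [setIntegral_congr_set hae, setIntegral_congr_set hae]
  set D := ZSpan.fundamentalDomain (Pi.basisFun ℝ (Fin n))
  have hshift : ∫ x in D, g (x + a) = ∫ x in (a +ᵥ D : Set (Fin n → ℝ)), g x := by
    have := (measurePreserving_vadd a (volume : Measure (Fin n → ℝ))).setIntegral_image_emb
      (measurableEmbedding_const_vadd a) g D
    rw [show (a +ᵥ D : Set (Fin n → ℝ)) = Set.image (fun x => a +ᵥ x) D from rfl, this]
    simp only [vadd_eq_add, add_comm a]
  rw [hshift]
  have : Countable (Submodule.span ℤ (Set.range (Pi.basisFun ℝ (Fin n)))).toAddSubgroup :=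
    inferInstanceAs (Countable (Submodule.span ℤ (Set.range (Pi.basisFun ℝ (Fin n)))))
  refine (hD.vadd_of_comm a).setIntegral_eq hD ?_
  rintro ⟨v, hv⟩ x
  obtain ⟨c, hc⟩ := (Submodule.mem_span_range_iff_exists_fun ℤ).mp hv
  have hv' : v = fun i => (c i : ℝ) := by
    rw [← hc]
    ext i
    simp [Finset.sum_apply, Pi.single_apply]
  change g (v + x) = g x
  rw [add_comm, hv']
  exact hg x c

theorem sq_integral_le_integral_sq {α : Type*} [MeasurableSpace α] {μ : Measure α}
    [IsProbabilityMeasure μ] {g : α → ℝ} (hg : Integrable g μ)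
    (hg2 : Integrable (fun x => g x ^ 2) μ) : (∫ x, g x ∂μ) ^ 2 ≤ ∫ x, g x ^ 2 ∂μ :=
  (even_two.convexOn_pow).map_integral_le (continuous_pow 2).continuousOn isClosed_univ
    (by simp) hg hg2

theorem fderiv_eq_dotc_grad {n : ℕ} (f : (Fin n → ℝ) → ℝ) (x h : Fin n → ℝ) :
    fderiv ℝ f x h = dotc h (grad f x) := by
  conv_lhs => rw [pi_eq_sum_univ' h]
  simp [dotc, grad, pd, map_sum]

theorem sq_dotc_le {n : ℕ} (v w : Fin n → ℝ) : dotc v w ^ 2 ≤ euclSq v * euclSq w :=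
  Finset.sum_mul_sq_le_sq_mul_sq _ _ _

theorem ContDiff.continuous_pd {n : ℕ} {f : (Fin n → ℝ) → ℝ} (hf : ContDiff ℝ 1 f) (i : Fin n) :
    Continuous (pd f i) :=
  (hf.continuous_fderiv one_ne_zero).clm_apply continuous_const

theorem ContDiff.continuous_euclSq_grad {n : ℕ} {f : (Fin n → ℝ) → ℝ} (hf : ContDiff ℝ 1 f) :
    Continuous fun x => euclSq (grad f x) :=
  continuous_finsetSum _ fun i _ => (hf.continuous_pd i).pow 2

theorem IsPeriodic.pd {n : ℕ} {f : (Fin n → ℝ) → ℝ} (hf : IsPeriodic f) (i : Fin n) :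
    IsPeriodic (pd f i) := by
  intro x k
  have h : (fun y => f (y + fun i => (k i : ℝ))) = f := funext fun y => hf y k
  unfold _root_.pd
  rw [← fderiv_comp_add_right, h]

theorem sq_translate_sub_le {n : ℕ} {f : (Fin n → ℝ) → ℝ} (hf : ContDiff ℝ 1 f)
    (x h : Fin n → ℝ) :
    (f (x + h) - f x) ^ 2
      ≤ ∫ s in Set.Ioo (0 : ℝ) 1, euclSq h * euclSq (grad f (x + s • h)) := by
  have hc : Continuous fun s : ℝ => fderiv ℝ f (x + s • h) h :=
    ((hf.continuous_fderiv one_ne_zero).comp (by fun_prop)).clm_apply continuous_const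
  have hd : ∀ s : ℝ, HasDerivAt (fun s : ℝ => f (x + s • h)) (fderiv ℝ f (x + s • h) h) s := by
    intro s
    have h1 : HasDerivAt (fun s : ℝ => x + s • h) h s := by
      simpa using ((hasDerivAt_id s).smul_const h).const_add x
    exact ((hf.differentiable one_ne_zero) _).hasFDerivAt.comp_hasDerivAt s h1
  have hftc := intervalIntegral.integral_eq_sub_of_hasDerivAt (a := 0) (b := 1)
    (fun s _ => hd s) (hc.intervalIntegrable _ _)
  rw [intervalIntegral.integral_of_le zero_le_one, integral_Ioc_eq_integral_Ioo] at hftc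
  simp only [one_smul, zero_smul, add_zero] at hftc
  rw [← hftc]
  refine (sq_integral_le_integral_sq hc.integrableOn_Ioo_zero_one
    (hc.pow 2).integrableOn_Ioo_zero_one).trans ?_
  refine integral_mono (hc.pow 2).integrableOn_Ioo_zero_one ?_ fun s => ?_
  · exact Continuous.integrableOn_Ioo_zero_one
      (continuous_const.mul (hf.continuous_euclSq_grad.comp (by fun_prop)))
  · simp only [fderiv_eq_dotc_grad]
    exact sq_dotc_le _ _

theorem integral_sq_translate_sub_le {n : ℕ} {f : (Fin n → ℝ) → ℝ} (hf : ContDiff ℝ 1 f)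
    (hp : IsPeriodic f) (h : Fin n → ℝ) :
    ∫ x in unitCell n, (f (x + h) - f x) ^ 2
      ≤ euclSq h * ∫ x in unitCell n, euclSq (grad f x) := by
  have hG := hf.continuous_euclSq_grad
  have hcont : Continuous fun p : (Fin n → ℝ) × ℝ =>
      euclSq h * euclSq (grad f (p.1 + p.2 • h)) :=
    continuous_const.mul (hG.comp (by fun_prop))
  have hint := hcont.integrable_unitCell_prod_Ioo
  have hper : IsPeriodic fun x => euclSq (grad f x) := fun x k => by
    simp only [euclSq, grad, fun i => hp.pd i x k]
  calc ∫ x in unitCell n, (f (x + h) - f x) ^ 2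
      ≤ ∫ x in unitCell n, ∫ s in Set.Ioo (0 : ℝ) 1,
          euclSq h * euclSq (grad f (x + s • h)) := by
        refine integral_mono (Continuous.integrableOn_unitCell ?_) hint.integral_prod_left
          fun x => sq_translate_sub_le hf x h
        have := hf.continuous
        fun_prop
    _ = ∫ s in Set.Ioo (0 : ℝ) 1, ∫ x in unitCell n,
          euclSq h * euclSq (grad f (x + s • h)) := integral_integral_swap hint
    _ = euclSq h * ∫ x in unitCell n, euclSq (grad f x) := by
        simp only [integral_const_mul,
          fun s : ℝ => hper.setIntegral_comp_add (s • h)]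
        simp

theorem integral_euclSq_sub_half (n : ℕ) :
    ∫ u in unitCell n, euclSq (u + fun _ => (-1 / 2 : ℝ)) = n / 12 := by
  simp only [euclSq, Pi.add_apply]
  rw [integral_finsetSum _ fun i _ => Continuous.integrableOn_unitCell (by fun_prop)]
  have h1 : ∀ i : Fin n, ∫ u in unitCell n, (u i + -1 / 2) ^ 2 = (1 / 12 : ℝ) := by
    intro i
    rw [restrict_unitCell]
    rw [integral_comp_eval (μ := fun _ : Fin n => (volume : Measure ℝ).restrict (Set.Ioo 0 1))
      (i := i) (f := fun t : ℝ => (t + -1 / 2) ^ 2)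
      (Continuous.aestronglyMeasurable (by fun_prop))]
    rw [← integral_Ioc_eq_integral_Ioo, ← intervalIntegral.integral_of_le zero_le_one,
      intervalIntegral.integral_comp_add_right (fun t : ℝ => t ^ 2), integral_pow]
    norm_num
  simp only [h1]
  simp
  ring

/-- Poincaré inequality for zero-mean periodic functions. -/
theorem poincare_periodic {n : ℕ} {f : (Fin n → ℝ) → ℝ} (hf : ContDiff ℝ 1 f)
    (hp : IsPeriodic f) (h0 : ∫ x in unitCell n, f x = 0) :
    ∫ x in unitCell n, f x ^ 2 ≤ n / 12 * ∫ x in unitCell n, euclSq (grad f x) := by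
  set c : Fin n → ℝ := fun _ => -1 / 2
  have hfc := hf.continuous
  have hcont : Continuous fun p : (Fin n → ℝ) × (Fin n → ℝ) =>
      (f (p.1 + (p.2 + c)) - f p.1) ^ 2 := by fun_prop
  have hint := hcont.integrable_unitCell_prod
  have hpt : ∀ x, f x ^ 2 ≤ ∫ u in unitCell n, (f (x + (u + c)) - f x) ^ 2 := by
    intro x
    have hm : ∫ u in unitCell n, (f (x + (u + c)) - f x) = - f x := by
      rw [integral_sub (Continuous.integrableOn_unitCell (by fun_prop)) (integrable_const _)]
      simp only [show ∀ u, x + (u + c) = u + (x + c) from fun u => by abel,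
        hp.setIntegral_comp_add (x + c), h0]
      simp
    rw [← neg_sq, ← hm]
    exact sq_integral_le_integral_sq (Continuous.integrableOn_unitCell (by fun_prop))
      (Continuous.integrableOn_unitCell (by fun_prop))
  calc ∫ x in unitCell n, f x ^ 2
      ≤ ∫ x in unitCell n, ∫ u in unitCell n, (f (x + (u + c)) - f x) ^ 2 :=
        integral_mono (Continuous.integrableOn_unitCell (by fun_prop)) hint.integral_prod_left hpt
    _ = ∫ u in unitCell n, ∫ x in unitCell n, (f (x + (u + c)) - f x) ^ 2 :=
        integral_integral_swap hint
    _ ≤ ∫ u in unitCell n, euclSq (u + c) * ∫ x in unitCell n, euclSq (grad f x) := by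
        refine integral_mono hint.integral_prod_right ?_
          fun u => integral_sq_translate_sub_le hf hp (u + c)
        refine Integrable.mul_const (Continuous.integrableOn_unitCell ?_) _
        unfold euclSq
        fun_prop
    _ = n / 12 * ∫ x in unitCell n, euclSq (grad f x) := by
        rw [integral_mul_const, integral_euclSq_sub_half]

theorem frobSq_nonneg {n : ℕ} (M : Matrix (Fin n) (Fin n) ℝ) : 0 ≤ frobSq M :=
  Finset.sum_nonneg fun _ _ => Finset.sum_nonneg fun _ _ => sq_nonneg _

theorem euclSq_nonneg {n : ℕ} (v : Fin n → ℝ) : 0 ≤ euclSq v :=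
  Finset.sum_nonneg fun _ _ => sq_nonneg _

theorem sq_frobInner_le {n : ℕ} (M N : Matrix (Fin n) (Fin n) ℝ) :
    frobInner M N ^ 2 ≤ frobSq M * frobSq N := by
  simp only [frobInner, frobSq, ← Fintype.sum_prod_type']
  exact Finset.sum_mul_sq_le_sq_mul_sq _ _ _

theorem sq_frobInner_add_dotc_le {n : ℕ} (M N : Matrix (Fin n) (Fin n) ℝ) (v w : Fin n → ℝ) :
    (frobInner M N + dotc v w) ^ 2 ≤ (frobSq M + euclSq v) * (frobSq N + euclSq w) := by
  have h1 := sq_frobInner_le M N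
  have h2 := sq_dotc_le v w
  set p := frobInner M N
  set q := dotc v w
  have ha := frobSq_nonneg M
  have hb := euclSq_nonneg v
  have hc := frobSq_nonneg N
  have hd := euclSq_nonneg w
  have h3 : (p * q) ^ 2 ≤ (frobSq M * euclSq w) * (euclSq v * frobSq N) := by
    rw [mul_pow]
    calc p ^ 2 * q ^ 2 ≤ (frobSq M * frobSq N) * (euclSq v * euclSq w) := by gcongr
      _ = _ := by ring
  have h4 : 2 * (p * q) ≤ frobSq M * euclSq w + euclSq v * frobSq N := by
    refine abs_le_of_sq_le_sq' ?_ (by positivity) |>.2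
    nlinarith [sq_nonneg (frobSq M * euclSq w - euclSq v * frobSq N)]
  nlinarith

theorem frobInner_one_left {n : ℕ} (M : Matrix (Fin n) (Fin n) ℝ) :
    frobInner 1 M = Matrix.trace M := by
  simp [frobInner, Matrix.one_apply, Matrix.trace]

theorem frobInner_sub_left {n : ℕ} (M N P : Matrix (Fin n) (Fin n) ℝ) :
    frobInner (M - N) P = frobInner M P - frobInner N P := by
  simp [frobInner, sub_mul, Finset.sum_sub_distrib]

theorem frobSq_smul_sub_one {n : ℕ} (c : ℝ) (M : Matrix (Fin n) (Fin n) ℝ) :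
    frobSq (c • M - 1) = c ^ 2 * frobSq M - 2 * c * Matrix.trace M + n := by
  have h : ∀ i j, (c • M - 1) i j ^ 2
      = c ^ 2 * M i j ^ 2 - 2 * c * ((1 : Matrix (Fin n) (Fin n) ℝ) i j * M i j)
        + (1 : Matrix (Fin n) (Fin n) ℝ) i j := by
    intro i j
    by_cases hij : i = j
    · subst hij
      simp only [Matrix.sub_apply, Matrix.smul_apply, Matrix.one_apply_eq, smul_eq_mul]
      ring
    · simp [hij]; ring
  simp only [frobSq, h, Finset.sum_add_distrib, Finset.sum_sub_distrib, ← Finset.mul_sum]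
  have := frobInner_one_left M
  rw [frobInner] at this
  rw [this]
  simp [Matrix.one_apply]

theorem euclSq_smul {n : ℕ} (c : ℝ) (v : Fin n → ℝ) : euclSq (c • v) = c ^ 2 * euclSq v := by
  simp [euclSq, mul_pow, Finset.mul_sum]

/-- The Cordes condition bounds the distance of the renormalized coefficients to `(I, 0)`. -/
theorem cordes_renormalized_le {n : ℕ} {M : Matrix (Fin n) (Fin n) ℝ} {v : Fin n → ℝ} {δ : ℝ}
    (htr : Matrix.trace M ≠ 0) (hδ : 0 < (n : ℝ) - 1 + δ)
    (hc : (frobSq M + euclSq v) / Matrix.trace M ^ 2 ≤ 1 / ((n : ℝ) - 1 + δ)) :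
    frobSq ((Matrix.trace M / (frobSq M + euclSq v)) • M - 1)
      + euclSq ((Matrix.trace M / (frobSq M + euclSq v)) • v) ≤ 1 - δ := by
  have hM : 0 < frobSq M := by
    refine (frobSq_nonneg M).lt_of_ne fun h => htr ?_
    have h1 := sq_frobInner_le 1 M
    rw [← h, mul_zero, frobInner_one_left] at h1
    exact pow_eq_zero_iff two_ne_zero |>.1 (le_antisymm h1 (sq_nonneg _))
  have hS : 0 < frobSq M + euclSq v := add_pos_of_pos_of_nonneg hM (euclSq_nonneg v)
  rw [div_le_div_iff₀ (by positivity) hδ] at hc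
  rw [frobSq_smul_sub_one, euclSq_smul]
  set t := Matrix.trace M
  set S := frobSq M + euclSq v with hSdef
  have h1 : (n : ℝ) - 1 + δ ≤ t ^ 2 / S := by
    rw [le_div_iff₀ hS]; linarith
  have h2 : (t / S) ^ 2 * frobSq M - 2 * (t / S) * t + n + (t / S) ^ 2 * euclSq v
      = n - t ^ 2 / S := by
    have : (t / S) ^ 2 * frobSq M + (t / S) ^ 2 * euclSq v = t ^ 2 / S := by
      rw [← mul_add, ← hSdef]; field_simp
    have h3 : 2 * (t / S) * t = 2 * (t ^ 2 / S) := by ring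
    linarith
  linarith

theorem trace_pos_of_elliptic {n : ℕ} (hn : 1 ≤ n) {M : Matrix (Fin n) (Fin n) ℝ} {lam : ℝ}
    (hlam : 0 < lam) (h : ∀ ξ : Fin n → ℝ, lam * euclSq ξ ≤ dotc ξ (Matrix.mulVec M ξ)) :
    0 < Matrix.trace M := by
  have : Nonempty (Fin n) := ⟨⟨0, hn⟩⟩
  refine Finset.sum_pos (fun i _ => hlam.trans_le ?_) Finset.univ_nonempty
  simpa [euclSq, dotc, Pi.single_apply] using h (Pi.single i 1)

theorem frobSq_jac {n : ℕ} (w : (Fin n → ℝ) → Fin n → ℝ) (x : Fin n → ℝ) :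
    frobSq (jac w x) = ∑ i, euclSq (grad (fun y => w y i) x) := rfl

theorem divg_eq_trace_jac {n : ℕ} (w : (Fin n → ℝ) → Fin n → ℝ) (x : Fin n → ℝ) :
    divg w x = Matrix.trace (jac w x) := rfl

/-- Poincaré inequality for zero-mean periodic vector fields. -/
theorem poincare_periodic_field {n : ℕ} {w : (Fin n → ℝ) → Fin n → ℝ} (hw : ContDiff ℝ 1 w)
    (hp : IsPeriodic w) (h0 : ∫ x in unitCell n, w x = 0) :
    ∫ x in unitCell n, euclSq (w x) ≤ n / 12 * ∫ x in unitCell n, frobSq (jac w x) := by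
  have hwi : ∀ i, ContDiff ℝ 1 fun y => w y i := fun i => contDiff_pi.1 hw i
  have hci : ∀ i, Continuous fun y => w y i := fun i => (hwi i).continuous
  simp only [frobSq_jac, euclSq.eq_1 (w _)]
  rw [integral_finsetSum _ fun i _ => Continuous.integrableOn_unitCell (by fun_prop),
    integral_finsetSum _ fun i _ => (hwi i).continuous_euclSq_grad.integrableOn_unitCell,
    Finset.mul_sum]
  refine Finset.sum_le_sum fun i _ => poincare_periodic (hwi i) (fun x k => by rw [hp x k]) ?_
  rw [← eval_integral fun i => (hci i).integrableOn_unitCell, h0, Pi.zero_apply]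

theorem kappa_mem_Ioc {n : ℕ} {δ : ℝ}
    (hδ : δ ∈ Set.Ioc ((n : ℝ) / ((n : ℝ) + Real.pi ^ 2)) 1) :
    kappa n δ ∈ Set.Ioc (0 : ℝ) 1 := by
  have hpi : 0 < Real.pi ^ 2 := by positivity
  refine ⟨mul_pos (sub_pos.2 hδ.1) (by positivity), ?_⟩
  calc kappa n δ ≤ (1 - (n : ℝ) / (n + Real.pi ^ 2)) * ((n + Real.pi ^ 2) / Real.pi ^ 2) :=
        mul_le_mul_of_nonneg_right (by linarith [hδ.2]) (by positivity)
    _ = 1 := by field_simp; ring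

theorem one_sub_kappa (n : ℕ) (δ : ℝ) :
    1 - kappa n δ = (1 - δ) * (1 + n / Real.pi ^ 2) := by
  have hpi : 0 < Real.pi ^ 2 := by positivity
  unfold kappa
  field_simp
  ring

/-- In Setting B, `κ ∈ (0,1]` and for every `C¹` periodic vector field
`w` with zero mean over `Y` there holds
`∫_Y |Ã:Dw + b̃·w − ∇·w|² ≤ (1−κ) ∫_Y |Dw|²`. -/
theorem stmt_5 {n : ℕ} (hn : 1 ≤ n)
    (A : (Fin n → ℝ) → Matrix (Fin n) (Fin n) ℝ) (b : (Fin n → ℝ) → Fin n → ℝ)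
    (lam Lam δ : ℝ) (hAB : SettingB A b lam Lam δ) :
    kappa n δ ∈ Set.Ioc (0 : ℝ) 1 ∧
      ∀ w : (Fin n → ℝ) → Fin n → ℝ, ContDiff ℝ 1 w → IsPeriodic w →
        (∫ x in unitCell n, w x) = 0 →
        (∫ x in unitCell n,
          (frobInner (gam A b x • A x) (jac w x) + dotc (gam A b x • b x) (w x)
            - divg w x) ^ 2)
          ≤ (1 - kappa n δ) * ∫ x in unitCell n, frobSq (jac w x) := by
  have hδ := hAB.delta_mem
  have hδ0 : 0 < δ := lt_of_le_of_lt (by positivity) hδ.1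
  have hn' : (1 : ℝ) ≤ n := by exact_mod_cast hn
  refine ⟨kappa_mem_Ioc hδ, fun w hw hp h0 => ?_⟩
  have hJ : Integrable (fun x => frobSq (jac w x)) (volume.restrict (unitCell n)) := by
    simp only [frobSq_jac]
    exact integrable_finsetSum _ fun i _ =>
      (contDiff_pi.1 hw i).continuous_euclSq_grad.integrableOn_unitCell
  have hW : Integrable (fun x => euclSq (w x)) (volume.restrict (unitCell n)) := by
    have := hw.continuous
    refine Continuous.integrableOn_unitCell ?_
    unfold euclSq
    fun_prop
  have hpt : ∀ᵐ x ∂(volume : Measure (Fin n → ℝ)),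
      (frobInner (gam A b x • A x) (jac w x) + dotc (gam A b x • b x) (w x) - divg w x) ^ 2
        ≤ (1 - δ) * (frobSq (jac w x) + euclSq (w x)) := by
    filter_upwards [hAB.ellip, hAB.cordes] with x hell hcor
    have htr := trace_pos_of_elliptic hn hAB.lam_pos fun ξ => (hell ξ).1
    have hco := cordes_renormalized_le htr.ne' (by linarith) hcor
    have hsplit : frobInner (gam A b x • A x) (jac w x) + dotc (gam A b x • b x) (w x)
        - divg w x
        = frobInner (gam A b x • A x - 1) (jac w x) + dotc (gam A b x • b x) (w x) := by
      rw [frobInner_sub_left, frobInner_one_left, divg_eq_trace_jac]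
      ring
    rw [hsplit]
    exact (sq_frobInner_add_dotc_le _ _ _ _).trans
      (mul_le_mul_of_nonneg_right hco (add_nonneg (frobSq_nonneg _) (euclSq_nonneg _)))
  have hE : 0 ≤ ∫ x in unitCell n, frobSq (jac w x) :=
    integral_nonneg fun x => frobSq_nonneg _
  have hpi : (n : ℝ) / 12 ≤ n / Real.pi ^ 2 := by
    have := Real.pi_lt_d2
    have := Real.pi_pos
    gcongr
    nlinarith
  calc _ ≤ ∫ x in unitCell n, (1 - δ) * (frobSq (jac w x) + euclSq (w x)) :=
        integral_mono_of_nonneg (Filter.Eventually.of_forall fun x => sq_nonneg _)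
          ((hJ.add hW).const_mul _) (ae_restrict_of_ae hpt)
    _ = (1 - δ) * ((∫ x in unitCell n, frobSq (jac w x)) + ∫ x in unitCell n, euclSq (w x)) := by
        rw [integral_const_mul, integral_add hJ hW]
    _ ≤ (1 - δ) * ((∫ x in unitCell n, frobSq (jac w x))
          + n / Real.pi ^ 2 * ∫ x in unitCell n, frobSq (jac w x)) := by
        refine mul_le_mul_of_nonneg_left ?_ (by linarith [hδ.2])
        gcongr
        exact (poincare_periodic_field hw hp h0).trans (mul_le_mul_of_nonneg_right hpi hE)
    _ = (1 - kappa n δ) * ∫ x in unitCell n, frobSq (jac w x) := by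
        rw [one_sub_kappa]
        ring
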